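/- For every unital additive semigroup Γ ⊆ ℝ (i.e., 0 ∈ Γ and Γ + Γ ⊆ Γ), the Banach space APH_Γ(T) of holomorphic almost periodic functions on the strip T with spectrum contained in Γ has the approximation property. -/

import Mathlib

open Complex Filter Topology Set Metric
open scoped BoundedContinuousFunction

noncomputable section

namespace SAP

variable {B : Type*} [NormedAddCommGroup B] [NormedSpace ℂ B]

def translateR (f : ℝ →ᵇ B) (τ : ℝ) : ℝ →ᵇ B :=
  f.compContinuous ⟨fun x => x + τ, by continuity⟩

def IsAP (f : ℝ →ᵇ B) : Prop := IsCompact (closure (Set.range (translateR f)))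

def meanValueR (g : ℝ → B) : B :=
  haveI : Nonempty B := ⟨0⟩
  limUnder atTop (fun T : ℝ => (2 * T)⁻¹ • ∫ x in (-T)..T, g x)

def bohrCoeffR (g : ℝ → B) (lam : ℝ) : B :=
  meanValueR (fun x => Complex.exp (-(Complex.I * lam * x)) • g x)

def apSpec (g : ℝ → B) : Set ℝ := {lam | bohrCoeffR g lam ≠ 0}

def IsUnitalSemigroup (Γ : Set ℝ) : Prop :=
  (0 : ℝ) ∈ Γ ∧ ∀ a ∈ Γ, ∀ b ∈ Γ, a + b ∈ Γ

def HasApproxProperty (X : Type*) [NormedAddCommGroup X] [NormedSpace ℂ X] : Prop :=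
  ∀ K : Set X, IsCompact K → ∀ ε : ℝ, 0 < ε →
    ∃ T : X →L[ℂ] X, FiniteDimensional ℂ (LinearMap.range (T : X →ₗ[ℂ] X)) ∧
      ∀ x ∈ K, ‖T x - x‖ < ε

/-! ### The strip -/

/-- the closed strip `T = {z : 0 ≤ Im z ≤ π}` -/
def stripSet : Set ℂ := {z | z.im ∈ Set.Icc 0 Real.pi}

/-- the open strip -/
def stripO : Set ℂ := {z | z.im ∈ Set.Ioo 0 Real.pi}

/-- horizontal translation on the strip -/
def stripShift (x : ℝ) : C(stripSet, stripSet) :=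
  ⟨fun z => ⟨(z : ℂ) + (x : ℂ), by
      show ((z : ℂ) + (x : ℂ)).im ∈ Set.Icc 0 Real.pi
      rw [Complex.add_im, Complex.ofReal_im, add_zero]
      exact z.2⟩, by
    apply Continuous.subtype_mk
    exact continuous_subtype_val.add continuous_const⟩

def translateS (f : stripSet →ᵇ B) (x : ℝ) : stripSet →ᵇ B :=
  f.compContinuous (stripShift x)

open scoped Classical in
/-- extension by zero of a function on the strip -/
def stripExt (f : stripSet →ᵇ B) : ℂ → B :=
  fun z => if h : z ∈ stripSet then f ⟨z, h⟩ else 0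

/-- holomorphic almost periodic function on the strip -/
def IsAPH (f : stripSet →ᵇ B) : Prop :=
  DifferentiableOn ℂ (stripExt f) stripO ∧
    IsCompact (closure (Set.range (translateS f)))

/-- a real point, as a point of the strip -/
def realPt (x : ℝ) : stripSet :=
  ⟨(x : ℂ), by simp [stripSet, Real.pi_nonneg]⟩

/-- spectrum of a holomorphic almost periodic function (computed along `ℝ ⊂ T`) -/
def aphSpec (f : stripSet →ᵇ B) : Set ℝ := apSpec (fun x : ℝ => f (realPt x))

/-- the set `APH_Γ(T)` -/
def APHset (Γ : Set ℝ) : Set (stripSet →ᵇ ℂ) := {f | IsAPH f ∧ aphSpec f ⊆ Γ}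

end SAP

/-!
The Bochner compactness of the translates makes an almost periodic function continuous at `0` for
the topology on `ℝ` induced by the Bohr compactification (Bogoliubov). Products of the kernels
`(1 + cos (l t)) / 2`, raised to a high power and normalized, are non-negative trigonometric
polynomials of mean one that concentrate near `0` in this topology. Convolution in the mean with
such a kernel is a contraction that does not enlarge the spectrum, has finite rank because the
kernel is a trigonometric polynomial, and is close to the identity on a given finite set.
Contractivity upgrades finite sets to compact ones.
-/

namespace SAP

/-! ### Bogoliubov's theorem -/

section Bogoliubov

open scoped Pointwise

variable {G : Type*} [AddCommGroup G]

/-- The Fourier transform, with respect to counting measure, of the indicator function of a finite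
set `A`, as a function on the dual group. -/
def indicatorDFT (A : Finset G) (ψ : AddChar G ℂ) : ℂ := ∑ a ∈ A, ψ a

lemma indicatorDFT_zero (A : Finset G) : indicatorDFT A 0 = A.card := by
  simp [indicatorDFT]

lemma conj_indicatorDFT [Finite G] (A : Finset G) (ψ : AddChar G ℂ) :
    (starRingEnd ℂ) (indicatorDFT A ψ) = ∑ a ∈ A, ψ (-a) := by
  simp only [indicatorDFT, map_sum, AddChar.map_neg_eq_conj]

lemma sum_norm_indicatorDFT_sq [Fintype G] (A : Finset G) :
    ∑ ψ, ‖indicatorDFT A ψ‖ ^ 2 = Fintype.card G * A.card := by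
  classical
  have expand (ψ : AddChar G ℂ) :
      ((‖indicatorDFT A ψ‖ ^ 2 : ℝ) : ℂ) = ∑ a ∈ A, ∑ b ∈ A, ψ (a - b) := by
    rw [ofReal_pow, ← mul_conj', conj_indicatorDFT, indicatorDFT, Finset.sum_mul_sum]
    simp_rw [sub_eq_add_neg, AddChar.map_add_eq_mul]
  have orthogonality : ∑ ψ : AddChar G ℂ, ∑ a ∈ A, ∑ b ∈ A, ψ (a - b)
      = (Fintype.card G * A.card : ℂ) := by
    rw [Finset.sum_comm]
    simp_rw [Finset.sum_comm (s := Finset.univ), AddChar.sum_apply_eq_ite, sub_eq_zero,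
      Finset.sum_ite_eq]
    rw [Finset.sum_ite_mem, Finset.inter_self, Finset.sum_const, nsmul_eq_mul, mul_comm]
  simp_rw [← expand] at orthogonality
  exact_mod_cast orthogonality

lemma sum_norm_indicatorDFT_pow_four_mul_re_eq_zero [Finite G] {A : Finset G} {x : G}
    (hx : x ∉ (A + A - A - A : Set G)) :
    ∑ ψ, ‖indicatorDFT A ψ‖ ^ 4 * (ψ x).re = 0 := by
  classical
  cases nonempty_fintype G
  have expand (ψ : AddChar G ℂ) : ((‖indicatorDFT A ψ‖ ^ 4 : ℝ) : ℂ) * ψ (-x)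
      = ∑ a ∈ A, ∑ b ∈ A, ∑ c ∈ A, ∑ d ∈ A, ψ (a + b - c - d - x) := by
    calc ((‖indicatorDFT A ψ‖ ^ 4 : ℝ) : ℂ) * ψ (-x)
        = indicatorDFT A ψ * (indicatorDFT A ψ * ((starRingEnd ℂ) (indicatorDFT A ψ) *
            ((starRingEnd ℂ) (indicatorDFT A ψ) * ψ (-x)))) := by
          rw [show ((‖indicatorDFT A ψ‖ ^ 4 : ℝ) : ℂ) = ((‖indicatorDFT A ψ‖ : ℂ) ^ 2) ^ 2 by
            push_cast; ring, ← mul_conj']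
          ring
      _ = _ := by
          rw [conj_indicatorDFT, indicatorDFT]
          simp_rw [sub_eq_add_neg, AddChar.map_add_eq_mul, Finset.sum_mul, Finset.mul_sum,
            mul_assoc]
  have vanish : ∑ ψ : AddChar G ℂ, ((‖indicatorDFT A ψ‖ ^ 4 : ℝ) : ℂ) * ψ (-x) = 0 := by
    simp_rw [expand, Finset.sum_comm (s := Finset.univ), AddChar.sum_apply_eq_ite]
    refine Finset.sum_eq_zero fun a ha => Finset.sum_eq_zero fun b hb =>
      Finset.sum_eq_zero fun c hc => Finset.sum_eq_zero fun d hd => if_neg fun h => hx ?_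
    exact ⟨_, ⟨_, ⟨a, ha, b, hb, rfl⟩, c, hc, rfl⟩, d, hd, sub_eq_zero.1 h⟩
  simpa only [re_sum, re_ofReal_mul, AddChar.map_neg_eq_conj, conj_re, zero_re] using
    congrArg re vanish

variable [Fintype G]

/-- The characters at which the Fourier transform of the indicator function of `A` is at least
`√τ` in absolute value. -/
def largeSpectrum (A : Finset G) (τ : ℝ) : Finset (AddChar G ℂ) :=
  {ψ | τ ≤ ‖indicatorDFT A ψ‖ ^ 2}

lemma card_largeSpectrum_mul_le (A : Finset G) (τ : ℝ) :
    (largeSpectrum A τ).card * τ ≤ Fintype.card G * A.card := by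
  rw [← sum_norm_indicatorDFT_sq, ← nsmul_eq_mul]
  refine (Finset.card_nsmul_le_sum _ (fun ψ => ‖indicatorDFT A ψ‖ ^ 2) τ
    fun ψ hψ => (Finset.mem_filter.1 hψ).2).trans ?_
  exact Finset.sum_le_sum_of_subset_of_nonneg (Finset.subset_univ _) fun _ _ _ => by positivity

lemma mem_add_sub_sub_of_largeSpectrum_re_nonneg {A : Finset G} {τ : ℝ} (hτ : 0 ≤ τ)
    (hA : τ * Fintype.card G < (A.card : ℝ) ^ 3) {x : G}
    (hx : ∀ ψ ∈ largeSpectrum A τ, 0 ≤ (ψ x).re) : x ∈ (A + A - A - A : Set G) := by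
  classical
  by_contra hcon
  have lower (ψ : AddChar G ℂ) :
      (if ψ = 0 then (A.card : ℝ) ^ 4 else 0) - τ * ‖indicatorDFT A ψ‖ ^ 2
        ≤ ‖indicatorDFT A ψ‖ ^ 4 * (ψ x).re := by
    have nonneg : 0 ≤ τ * ‖indicatorDFT A ψ‖ ^ 2 := by positivity
    rcases eq_or_ne ψ 0 with rfl | hψ
    · simpa [indicatorDFT_zero] using mul_nonneg hτ (sq_nonneg (A.card : ℝ))
    rw [if_neg hψ]
    by_cases hlarge : τ ≤ ‖indicatorDFT A ψ‖ ^ 2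
    · have := mul_nonneg (pow_nonneg (norm_nonneg (indicatorDFT A ψ)) 4)
        (hx ψ (Finset.mem_filter.2 ⟨Finset.mem_univ _, hlarge⟩))
      linarith
    · have neg_one_le : -1 ≤ (ψ x).re :=
        (abs_le.1 ((abs_re_le_norm _).trans_eq (ψ.norm_apply x))).1
      nlinarith [sq_nonneg (‖indicatorDFT A ψ‖ ^ 2), sq_nonneg ‖indicatorDFT A ψ‖,
        mul_nonneg (sq_nonneg (‖indicatorDFT A ψ‖ ^ 2)) (sub_nonneg.2 neg_one_le)]
  have sum_le := Finset.sum_le_sum fun ψ (_ : ψ ∈ Finset.univ) => lower ψ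
  rw [sum_norm_indicatorDFT_pow_four_mul_re_eq_zero hcon, Finset.sum_sub_distrib,
    ← Finset.mul_sum, sum_norm_indicatorDFT_sq, Finset.sum_ite_eq' _ 0,
    if_pos (Finset.mem_univ _)] at sum_le
  have card_pos : (0 : ℝ) < A.card :=
    (Odd.pow_pos_iff (n := 3) (by decide)).1 (lt_of_le_of_lt (by positivity) hA)
  nlinarith [mul_lt_mul_of_pos_right hA card_pos]

theorem exists_finset_addChar_mem_add_sub_sub {A : Finset G} (hA : A.Nonempty) :
    ∃ Ψ : Finset (AddChar G ℂ), Ψ.card * A.card ^ 2 ≤ 2 * Fintype.card G ^ 2 ∧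
      ∀ x, (∀ ψ ∈ Ψ, 0 ≤ (ψ x).re) → x ∈ (A + A - A - A : Set G) := by
  have card_pos : (0 : ℝ) < A.card := by exact_mod_cast hA.card_pos
  have : (0 : ℝ) < Fintype.card G := by exact_mod_cast Fintype.card_pos
  set τ : ℝ := (A.card : ℝ) ^ 3 / (2 * Fintype.card G) with hτ
  refine ⟨largeSpectrum A τ, ?_, fun x hx =>
    mem_add_sub_sub_of_largeSpectrum_re_nonneg (by positivity) ?_ hx⟩
  · have h := card_largeSpectrum_mul_le A τ
    rw [hτ, ← mul_div_assoc, div_le_iff₀ (by positivity)] at h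
    have : ((largeSpectrum A τ).card : ℝ) * A.card ^ 2 ≤ 2 * Fintype.card G ^ 2 :=
      le_of_mul_le_mul_right (by linear_combination h) card_pos
    exact_mod_cast this
  · calc τ * Fintype.card G = (A.card : ℝ) ^ 3 / 2 := by rw [hτ]; field_simp
      _ < (A.card : ℝ) ^ 3 := half_lt_self (by positivity)

end Bogoliubov

/-- A subset `E` of an abelian group is syndetic if finitely many translates of it cover the group:
every `g` lies in `s + E` for some `s` in a fixed finite set. -/
def IsSyndetic {G : Type*} [AddCommGroup G] (E : Set G) : Prop :=
  ∃ S : Finset G, ∀ g, ∃ s ∈ S, g - s ∈ E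

section BogoliubovInt

open scoped Pointwise

lemma exists_fin_map_of_card_le {α : Type*} [Inhabited α] {s : Finset α} {m : ℕ}
    (hs : s.card ≤ m) : ∃ f : Fin m → α, ∀ a ∈ s, ∃ j, f j = a := by
  refine ⟨fun j => s.toList.getD j default, fun a ha => ?_⟩
  obtain ⟨i, hi, rfl⟩ := List.getElem_of_mem (Finset.mem_toList.2 ha)
  exact ⟨⟨i, hi.trans_le (by rwa [Finset.length_toList])⟩, by
    simp [List.getElem?_eq_getElem hi]⟩

lemma IsSyndetic.exists_le_mul_card {E : Set ℤ} (hE : IsSyndetic E) :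
    ∃ q M₀ : ℕ, ∀ M ≥ M₀, ∃ A ⊆ Finset.Ico (-(M : ℤ)) (2 * M), (A : Set ℤ) ⊆ E ∧
      M ≤ q * A.card := by
  classical
  obtain ⟨S, hS⟩ := hE
  refine ⟨S.card, S.sup Int.natAbs, fun M hM => ⟨(Finset.Ico (-(M : ℤ)) (2 * M)).filter (· ∈ E),
    Finset.filter_subset _ _, fun a ha => (Finset.mem_filter.1 ha).2, ?_⟩⟩
  set A := (Finset.Ico (-(M : ℤ)) (2 * M)).filter (· ∈ E)
  have cover : Finset.Ico (0 : ℤ) M ⊆ S + A := by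
    intro n hn
    obtain ⟨s, hs, hns⟩ := hS n
    have : s.natAbs ≤ M := (Finset.le_sup (f := Int.natAbs) hs).trans hM
    rw [Finset.mem_Ico] at hn
    exact Finset.mem_add.2 ⟨s, hs, n - s,
      Finset.mem_filter.2 ⟨Finset.mem_Ico.2 (by omega), hns⟩, by ring⟩
  simpa using (Finset.card_le_card cover).trans Finset.card_add_le

lemma eq_zero_of_abs_lt_of_intCast_eq_zero {N : ℕ} {k : ℤ} (hk : |k| < N)
    (h : (k : ZMod N) = 0) : k = 0 :=
  Int.eq_zero_of_abs_lt_dvd ((ZMod.intCast_zmod_eq_zero_iff_dvd k N).1 h) hk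

lemma injOn_intCast_of_subset_Ico {A : Set ℤ} {M : ℕ} (hA : A ⊆ Ico (-(M : ℤ)) (2 * M)) :
    InjOn (Int.cast : ℤ → ZMod (16 * M)) A := by
  intro a ha b hb hab
  have := hA ha
  have := hA hb
  simp only [mem_Ico] at *
  refine sub_eq_zero.1 (eq_zero_of_abs_lt_of_intCast_eq_zero (N := 16 * M) ?_ ?_)
  · rw [abs_lt]
    omega
  · rw [Int.cast_sub, hab, sub_self]

lemma mem_add_sub_sub_of_intCast_mem {A : Set ℤ} {M : ℕ}
    (hA : A ⊆ Ico (-(M : ℤ)) (2 * M)) {x : ℤ} (hxM : |x| ≤ M)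
    (hx : (x : ZMod (16 * M)) ∈
      (Int.cast '' A + Int.cast '' A - Int.cast '' A - Int.cast '' A : Set (ZMod (16 * M)))) :
    x ∈ A + A - A - A := by
  obtain ⟨_, ⟨_, ⟨_, ⟨a, ha, rfl⟩, _, ⟨b, hb, rfl⟩, rfl⟩, _, ⟨c, hc, rfl⟩, rfl⟩, _, ⟨d, hd, rfl⟩,
    habcd⟩ := hx
  refine ⟨_, ⟨_, ⟨a, ha, b, hb, rfl⟩, c, hc, rfl⟩, d, hd,
    sub_eq_zero.1 (eq_zero_of_abs_lt_of_intCast_eq_zero (N := 16 * M) ?_ ?_)⟩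
  · have := hA ha
    have := hA hb
    have := hA hc
    have := hA hd
    simp only [mem_Ico] at *
    rw [abs_le] at hxM
    rw [abs_lt]
    omega
  · push_cast
    exact sub_eq_zero.2 habcd

lemma exists_circle_mem_add_sub_sub_of_subset_Ico {A : Finset ℤ} {M q : ℕ} (hM : 0 < M)
    (hA : A ⊆ Finset.Ico (-(M : ℤ)) (2 * M)) (hcard : M ≤ q * A.card) :
    ∃ z : Fin (512 * q ^ 2) → Circle, ∀ x : ℤ, |x| ≤ M →
      (∀ j, 0 ≤ ((z j ^ x : Circle) : ℂ).re) → x ∈ (A + A - A - A : Set ℤ) := by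
  classical
  -- The integers `a + b - c - d - x` with `a, b, c, d ∈ A` and `|x| ≤ M` are smaller than `16 * M`
  -- in absolute value, so that it suffices to work modulo `16 * M`.
  have : NeZero (16 * M) := ⟨by omega⟩
  have hA' : (A : Set ℤ) ⊆ Ico (-(M : ℤ)) (2 * M) := by
    rw [← Finset.coe_Ico]
    exact_mod_cast hA
  have nonempty : A.Nonempty := Finset.card_pos.1 (Nat.pos_of_mul_pos_left (hM.trans_le hcard))
  obtain ⟨Ψ, hΨ, hmem⟩ := exists_finset_addChar_mem_add_sub_sub (nonempty.image
    (Int.cast : ℤ → ZMod (16 * M)))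
  rw [Finset.card_image_of_injOn (injOn_intCast_of_subset_Ico hA'), ZMod.card] at hΨ
  have card_le : Ψ.card ≤ 512 * q ^ 2 := by
    refine Nat.le_of_mul_le_mul_right (hΨ.trans ?_) (pow_pos nonempty.card_pos 2)
    calc 2 * (16 * M) ^ 2 = 512 * M ^ 2 := by ring
      _ ≤ 512 * (q * A.card) ^ 2 := by gcongr
      _ = 512 * q ^ 2 * A.card ^ 2 := by ring
  obtain ⟨ψ, hψ⟩ := exists_fin_map_of_card_le card_le
  refine ⟨fun j => AddChar.circleEquivComplex.symm (ψ j) 1, fun x hxM hx =>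
    mem_add_sub_sub_of_intCast_mem hA' hxM ?_⟩
  rw [← Finset.coe_image]
  refine hmem x fun χ hχ => ?_
  obtain ⟨j, rfl⟩ := hψ χ hχ
  have := hx j
  rw [← AddChar.map_zsmul_eq_zpow, zsmul_one] at this
  exact this

theorem IsSyndetic.exists_circle_mem_add_sub_sub {E : Set ℤ} (hE : IsSyndetic E) :
    ∃ (m : ℕ) (z : Fin m → Circle), ∀ x : ℤ, (∀ j, 0 < ((z j ^ x : Circle) : ℂ).re) →
      x ∈ E + E - E - E := by
  obtain ⟨q, M₀, hq⟩ := hE.exists_le_mul_card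
  have truncated (n : ℕ) : ∃ z : Fin (512 * q ^ 2) → Circle, ∀ x : ℤ, |x| ≤ n →
      (∀ j, 0 ≤ ((z j ^ x : Circle) : ℂ).re) → x ∈ E + E - E - E := by
    obtain ⟨A, hA, hAE, hcard⟩ := hq (M₀ + n + 1) (by omega)
    obtain ⟨z, hz⟩ := exists_circle_mem_add_sub_sub_of_subset_Ico (by omega) hA hcard
    refine ⟨z, fun x hx hzx => ?_⟩
    have := hz x (hx.trans (by push_cast; omega)) hzx
    exact Set.sub_subset_sub (Set.sub_subset_sub (Set.add_subset_add hAE hAE) hAE) hAE this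
  choose z hz using truncated
  obtain ⟨w, φ, hφ, hw⟩ := CompactSpace.tendsto_subseq z
  refine ⟨_, w, fun x hx => ?_⟩
  have eventually_pos : ∀ᶠ n in atTop, ∀ j, 0 < ((z (φ n) j ^ x : Circle) : ℂ).re := by
    refine eventually_all.2 fun j => ?_
    have cont : Continuous fun u : Fin (512 * q ^ 2) → Circle => ((u j ^ x : Circle) : ℂ).re :=
      continuous_re.comp (continuous_subtype_val.comp ((continuous_apply j).zpow x))
    exact ((cont.tendsto w).comp hw).eventually_const_lt (hx j)
  obtain ⟨n, hn, hxn⟩ := (eventually_pos.and (eventually_ge_atTop x.natAbs)).exists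
  have : n ≤ φ n := hφ.id_le n
  exact hz (φ n) x (by rw [Int.abs_eq_natAbs]; omega) fun j => (hn j).le

end BogoliubovInt

/-! ### Bohr neighbourhoods and almost periods -/

section BohrNhds

open scoped Uniformity

lemma exists_finset_forall_exists_mem_uniformity {ι α : Type*} [UniformSpace α] {V : ι → α}
    (hV : TotallyBounded (range V)) {d : Set (α × α)} (hd : d ∈ 𝓤 α) :
    ∃ S : Finset ι, ∀ i, ∃ s ∈ S, (V i, V s) ∈ d := by
  classical
  obtain ⟨t, ht, htf, hcover⟩ := hV.exists_subset hd
  lift t to Finset α using htf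
  rw [← image_univ] at ht
  obtain ⟨S, -, rfl⟩ := Finset.subset_set_image_iff.1 ht
  refine ⟨S, fun i => ?_⟩
  simpa using hcover (mem_range_self i)

/-- The neighbourhoods of `0` for the topology which `ℝ` inherits from its Bohr compactification,
that is, the coarsest topology making all characters `t ↦ exp (i l t)` continuous. -/
def bohrNhds : Filter ℝ :=
  comap (fun t l : ℝ => Circle.exp (l * t)) (𝓝 1)

lemma tendsto_circleExp_mul_bohrNhds (l : ℝ) :
    Tendsto (fun t => Circle.exp (l * t)) bohrNhds (𝓝 1) :=
  ((continuous_apply l).tendsto (1 : ℝ → Circle)).comp tendsto_comap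

lemma isSyndetic_of_mem_bohrNhds {U : Set ℝ} (hU : U ∈ bohrNhds) : IsSyndetic U := by
  obtain ⟨W, hW, hWU⟩ := mem_comap.1 hU
  have entourage :
      (fun p : (ℝ → Circle) × (ℝ → Circle) => p.1 / p.2) ⁻¹' W ∈ 𝓤 (ℝ → Circle) := by
    rw [uniformity_eq_comap_nhds_one_swapped]
    exact preimage_mem_comap hW
  obtain ⟨S, hS⟩ := exists_finset_forall_exists_mem_uniformity
    (isCompact_univ.totallyBounded.subset
      (subset_univ (range fun t l : ℝ => Circle.exp (l * t)))) entourage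
  refine ⟨S, fun t => ?_⟩
  obtain ⟨s, hs, hts⟩ := hS t
  refine ⟨s, hs, hWU ?_⟩
  have : (fun l => Circle.exp (l * (t - s))) =
      (fun l => Circle.exp (l * t)) / fun l => Circle.exp (l * s) := by
    ext1 l
    rw [Pi.div_apply, mul_sub, Circle.exp_sub]
  rwa [mem_preimage, this]

lemma exists_int_tendsto_sub_bohrNhds :
    ∃ n : ℝ → ℤ, Tendsto (fun t => t - n t) bohrNhds (𝓝 0) := by
  have exists_int (t : ℝ) :
      ∃ n : ℤ, t - n = arg (Circle.exp (2 * Real.pi * t)) / (2 * Real.pi) := by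
    obtain ⟨m, hm⟩ := Circle.exp_eq_exp.1 (Circle.exp_arg (Circle.exp (2 * Real.pi * t)))
    refine ⟨-m, ?_⟩
    rw [eq_div_iff (by positivity), hm]
    push_cast
    ring
  choose n hn using exists_int
  refine ⟨n, ?_⟩
  simp_rw [hn]
  have cont : ContinuousAt (fun z : Circle => arg (z : ℂ) / (2 * Real.pi)) 1 :=
    ((continuousAt_arg (by simp)).comp continuous_subtype_val.continuousAt).div_const _
  simpa [ContinuousAt, Function.comp_def] using
    cont.tendsto.comp (tendsto_circleExp_mul_bohrNhds (2 * Real.pi))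

lemma tendsto_zpow_of_tendsto_sub_bohrNhds {n : ℝ → ℤ}
    (hn : Tendsto (fun t => t - n t) bohrNhds (𝓝 0)) (z : Circle) :
    Tendsto (fun t => z ^ n t) bohrNhds (𝓝 1) := by
  have eq (t : ℝ) : z ^ n t = Circle.exp (arg z * t) / Circle.exp (arg z * (t - n t)) := by
    rw [← Circle.exp_sub, mul_sub, sub_sub_cancel, mul_comm (arg (z : ℂ)), ← zsmul_eq_mul,
      Circle.exp_zsmul, Circle.exp_arg]
  simp_rw [eq]
  have := (tendsto_circleExp_mul_bohrNhds (arg z)).div'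
    ((Circle.exp.continuous.tendsto _).comp (hn.const_mul (arg (z : ℂ))))
  simpa using this

end BohrNhds

section Orbit

variable {G M : Type*} [AddCommGroup G] [PseudoMetricSpace M]

/-- The group seminorm `g ↦ dist (V g) (V 0)` of an orbit map `V` of an isometric action; its small
balls are the sets of almost periods of `V`. -/
def orbitSeminorm (V : G → M) (hV : ∀ s t u, dist (V (s + u)) (V (t + u)) = dist (V s) (V t)) :
    AddGroupSeminorm G where
  toFun g := dist (V g) (V 0)
  map_zero' := dist_self _
  add_le' s t := by
    have := dist_triangle (V (s + t)) (V t) (V 0)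
    have := hV s 0 t
    rw [zero_add] at this
    linarith
  neg' s := by simpa [dist_comm] using (hV (-s) 0 s).symm

variable {V : G → M}

lemma dist_add_sub_sub_lt
    (hV : ∀ s t u, dist (V (s + u)) (V (t + u)) = dist (V s) (V t)) {ε : ℝ}
    {a b c d : G} (ha : dist (V a) (V 0) < ε) (hb : dist (V b) (V 0) < ε)
    (hc : dist (V c) (V 0) < ε) (hd : dist (V d) (V 0) < ε) :
    dist (V (a + b - c - d)) (V 0) < 4 * ε := by
  calc orbitSeminorm V hV (a + b - c - d)
      ≤ orbitSeminorm V hV a + orbitSeminorm V hV b + orbitSeminorm V hV c +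
          orbitSeminorm V hV d := by
        grw [map_sub_le_add, map_sub_le_add, map_add_le_add]
    _ < ε + ε + ε + ε := by gcongr <;> assumption
    _ = 4 * ε := by ring

lemma isSyndetic_setOf_dist_lt
    (hV : ∀ s t u, dist (V (s + u)) (V (t + u)) = dist (V s) (V t))
    (hV_tb : TotallyBounded (range V)) {ε : ℝ} (hε : 0 < ε) :
    IsSyndetic {g | dist (V g) (V 0) < ε} := by
  obtain ⟨S, hS⟩ :=
    exists_finset_forall_exists_mem_uniformity hV_tb (dist_mem_uniformity hε)
  refine ⟨S, fun g => ?_⟩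
  obtain ⟨s, hs, hgs⟩ := hS g
  refine ⟨s, hs, ?_⟩
  have := hV (g - s) 0 s
  rw [sub_add_cancel, zero_add] at this
  exact this.symm.trans_lt hgs

end Orbit

theorem tendsto_bohrNhds_of_totallyBounded {M : Type*} [PseudoMetricSpace M] {V : ℝ → M}
    (hV : ∀ s t u, dist (V (s + u)) (V (t + u)) = dist (V s) (V t))
    (hV_tb : TotallyBounded (range V)) (hV_cont : ContinuousAt V 0) :
    Tendsto V bohrNhds (𝓝 (V 0)) := by
  obtain ⟨n, hn⟩ := exists_int_tendsto_sub_bohrNhds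
  have tendsto_int : Tendsto (fun t => V (n t)) bohrNhds (𝓝 (V 0)) := by
    refine Metric.tendsto_nhds.2 fun ε hε => ?_
    have int_orbit (s t u : ℤ) :
        dist (V ((s + u : ℤ) : ℝ)) (V ((t + u : ℤ) : ℝ)) = dist (V (s : ℝ)) (V (t : ℝ)) := by
      push_cast
      exact hV _ _ _
    obtain ⟨m, z, hz⟩ := (isSyndetic_setOf_dist_lt int_orbit
      (hV_tb.subset (range_comp_subset_range (Int.cast : ℤ → ℝ) V))
      (show 0 < ε / 4 by positivity)).exists_circle_mem_add_sub_sub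
    have cont : Continuous fun w : Circle => (w : ℂ).re :=
      continuous_re.comp continuous_subtype_val
    have re_pos (j : Fin m) : ∀ᶠ t in bohrNhds, 0 < ((z j ^ n t : Circle) : ℂ).re :=
      ((cont.tendsto 1).comp (tendsto_zpow_of_tendsto_sub_bohrNhds hn (z j))).eventually_const_lt
        (by simp)
    filter_upwards [eventually_all.2 re_pos] with t ht
    obtain ⟨_, ⟨_, ⟨a, ha, b, hb, rfl⟩, c, hc, rfl⟩, d, hd, habcd⟩ := hz (n t) ht
    rw [← habcd]
    simpa [mul_div_cancel₀] using dist_add_sub_sub_lt int_orbit ha hb hc hd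
  have tendsto_frac : Tendsto (fun t => V (t - n t)) bohrNhds (𝓝 (V 0)) := hV_cont.tendsto.comp hn
  rw [tendsto_iff_dist_tendsto_zero] at tendsto_int tendsto_frac ⊢
  refine squeeze_zero (fun _ => dist_nonneg) (fun t => ?_)
    (by simpa using tendsto_int.add tendsto_frac)
  simpa using! map_add_le_add (orbitSeminorm V hV) (n t : ℝ) (t - n t)

/-! ### Nets of operators -/

lemma tendsto_clm_apply_of_mem_closure_span {ι 𝕜 X Y : Type*} [NontriviallyNormedField 𝕜]
    [NormedAddCommGroup X] [NormedSpace 𝕜 X] [NormedAddCommGroup Y] [NormedSpace 𝕜 Y]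
    {l : Filter ι} {T : ι → X →L[𝕜] Y} {T₀ : X →L[𝕜] Y} {C : ℝ} (hT : ∀ i, ‖T i‖ ≤ C) {s : Set X}
    (hs : ∀ x ∈ s, Tendsto (fun i => T i x) l (𝓝 (T₀ x))) {x : X}
    (hx : x ∈ (Submodule.span 𝕜 s).topologicalClosure) :
    Tendsto (fun i => T i x) l (𝓝 (T₀ x)) := by
  have equicont : Equicontinuous fun i => ⇑(T i) :=
    (show (∃ C, ∀ i, ‖T i‖ ≤ C) ↔ _ from (NormedSpace.equicontinuous_TFAE T).out 5 1).1 ⟨C, hT⟩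
  have span_subset : (Submodule.span 𝕜 s : Set X) ⊆
      {x | Tendsto (fun i => T i x) l (𝓝 (T₀ x))} := by
    intro x hx
    induction hx using Submodule.span_induction with
    | mem x hx => exact hs x hx
    | zero => simpa using tendsto_const_nhds
    | add x y _ _ hx hy => simpa using hx.add hy
    | smul c x _ hx => simpa using hx.const_smul c
  exact closure_minimal span_subset (equicont.isClosed_setOfPred_tendsto T₀.continuous) hx

lemma hasApproxProperty_of_forall_finset {X : Type*} [NormedAddCommGroup X] [NormedSpace ℂ X]
    {C : ℝ} (hX : ∀ (s : Finset X) (ε : ℝ), 0 < ε → ∃ T : X →L[ℂ] X,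
      FiniteDimensional ℂ (LinearMap.range (T : X →ₗ[ℂ] X)) ∧ ‖T‖ ≤ C ∧ ∀ x ∈ s, ‖T x - x‖ ≤ ε) :
    HasApproxProperty X := by
  intro K hK ε hε
  have hC : 0 ≤ C := by
    obtain ⟨T, -, hT, -⟩ := hX ∅ 1 one_pos
    exact (norm_nonneg T).trans hT
  set δ := ε / (C + 3)
  have hδ : 0 < δ := by positivity
  obtain ⟨N, -, hN, hKN⟩ := hK.finite_cover_balls hδ
  obtain ⟨T, hT_fin, hTC, hT⟩ := hX hN.toFinset δ hδ
  refine ⟨T, hT_fin, fun x hx => ?_⟩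
  obtain ⟨y, hy, hxy⟩ := mem_iUnion₂.1 (hKN hx)
  rw [mem_ball, dist_eq_norm] at hxy
  calc ‖T x - x‖ = ‖T (x - y) + (T y - y) - (x - y)‖ := by rw [map_sub]; abel_nf
    _ ≤ ‖T (x - y)‖ + ‖T y - y‖ + ‖x - y‖ := by grw [norm_sub_le, norm_add_le]
    _ ≤ C * δ + δ + δ := by
        grw [T.le_opNorm, hTC, hT y (hN.mem_toFinset.2 hy), hxy]
    _ < (C + 3) * δ := by linarith
    _ = ε := by rw [mul_div_cancel₀ _ (by positivity)]

lemma exists_strongDual_tendsto_ultrafilter {ι 𝕜 X : Type*} [NontriviallyNormedField 𝕜]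
    [ProperSpace 𝕜] [NormedAddCommGroup X] [NormedSpace 𝕜 X] (𝓤 : Ultrafilter ι)
    {T : ι → StrongDual 𝕜 X} {C : ℝ} (hT : ∀ i, ‖T i‖ ≤ C) :
    ∃ T₀ : StrongDual 𝕜 X, ∀ x, Tendsto (fun i => T i x) 𝓤 (𝓝 (T₀ x)) := by
  obtain ⟨T₀, -, hT₀⟩ := isCompact_iff_ultrafilter_le_nhds.1
    (WeakDual.isCompact_closedBall (0 : StrongDual 𝕜 X) C)
    (𝓤.map fun i => StrongDual.toWeakDual (T i)) (by
      rw [le_principal_iff]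
      exact Filter.mem_map.2 (univ_mem' fun i => by simpa using hT i))
  exact ⟨WeakDual.toStrongDual T₀, fun x => ((WeakDual.eval_continuous x).tendsto T₀).comp hT₀⟩

/-! ### An invariant mean on bounded continuous functions -/

lemma norm_inv_smul_integral_le (g : ℝ →ᵇ ℂ) (R : ℝ) :
    ‖(2 * R)⁻¹ • ∫ x in (-R)..R, g x‖ ≤ 1 * ‖g‖ := by
  have integral_le : ‖∫ x in (-R)..R, g x‖ ≤ ‖g‖ * |R - -R| :=
    intervalIntegral.norm_integral_le_of_norm_le_const fun x _ => g.norm_coe_le_norm x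
  calc ‖(2 * R)⁻¹ • ∫ x in (-R)..R, g x‖ ≤ |2 * R|⁻¹ * (‖g‖ * |2 * R|) := by
        rw [norm_smul, norm_inv, Real.norm_eq_abs]
        gcongr
        rwa [sub_neg_eq_add, ← two_mul] at integral_le
    _ = |2 * R|⁻¹ * |2 * R| * ‖g‖ := by ring
    _ ≤ 1 * ‖g‖ := by gcongr; exact inv_mul_le_one

/-- The functional averaging a bounded continuous function over `[-R, R]`; it is `0` for `R = 0`,
and is only used for `R > 0`. -/
def symmAverage (R : ℝ) : (ℝ →ᵇ ℂ) →L[ℂ] ℂ :=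
  LinearMap.mkContinuous
    { toFun := fun g => (2 * R)⁻¹ • ∫ x in (-R)..R, g x
      map_add' := fun f g => by
        simp only [BoundedContinuousFunction.coe_add, Pi.add_apply]
        rw [intervalIntegral.integral_add (f.continuous.intervalIntegrable _ _)
          (g.continuous.intervalIntegrable _ _), smul_add]
      map_smul' := fun c g => by
        simp only [BoundedContinuousFunction.coe_smul, RingHom.id_apply]
        rw [intervalIntegral.integral_smul, smul_comm] }
    1 fun g => norm_inv_smul_integral_le g R

lemma symmAverage_apply (R : ℝ) (g : ℝ →ᵇ ℂ) :
    symmAverage R g = (2 * R)⁻¹ • ∫ x in (-R)..R, g x := rfl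

lemma norm_symmAverage_le_one (R : ℝ) : ‖symmAverage R‖ ≤ 1 :=
  LinearMap.mkContinuous_norm_le _ zero_le_one _

lemma exists_tendsto_symmAverage_ultrafilter : ∃ m : (ℝ →ᵇ ℂ) →L[ℂ] ℂ, ∀ g,
    Tendsto (fun R => symmAverage R g) (Ultrafilter.of (atTop : Filter ℝ)) (𝓝 (m g)) :=
  exists_strongDual_tendsto_ultrafilter _ norm_symmAverage_le_one

/-- A translation invariant mean on the bounded continuous functions on `ℝ`, obtained as a limit of
the averages over `[-R, R]` along an ultrafilter. It agrees with the Bohr mean wherever the latter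
exists, but it is defined, linear and continuous on all bounded continuous functions. -/
def banachMean : (ℝ →ᵇ ℂ) →L[ℂ] ℂ :=
  exists_tendsto_symmAverage_ultrafilter.choose

lemma tendsto_symmAverage_banachMean (g : ℝ →ᵇ ℂ) :
    Tendsto (fun R => symmAverage R g) (Ultrafilter.of (atTop : Filter ℝ)) (𝓝 (banachMean g)) :=
  exists_tendsto_symmAverage_ultrafilter.choose_spec g

lemma banachMean_eq_of_tendsto {g : ℝ →ᵇ ℂ} {a : ℂ}
    (h : Tendsto (fun R => symmAverage R g) atTop (𝓝 a)) : banachMean g = a :=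
  tendsto_nhds_unique (tendsto_symmAverage_banachMean g) (h.mono_left (Ultrafilter.of_le _))

lemma tendsto_symmAverage_zero_of_norm_integral_le {g : ℝ →ᵇ ℂ} {C : ℝ}
    (h : ∀ R > 0, ‖∫ x in (-R)..R, g x‖ ≤ C) :
    Tendsto (fun R => symmAverage R g) atTop (𝓝 0) := by
  have bound : Tendsto (fun R : ℝ => (2 * R)⁻¹ * C) atTop (𝓝 0) := by
    simpa using (tendsto_inv_atTop_zero.comp
      (tendsto_id.const_mul_atTop (zero_lt_two (α := ℝ)))).mul_const C
  refine squeeze_zero_norm' ?_ bound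
  filter_upwards [eventually_gt_atTop 0] with R hR
  rw [symmAverage_apply, norm_smul, Real.norm_of_nonneg (by positivity)]
  gcongr
  exact h R hR

lemma banachMean_eq_of_norm_integral_sub_le {f g : ℝ →ᵇ ℂ} {C : ℝ}
    (h : ∀ R > 0, ‖(∫ x in (-R)..R, f x) - ∫ x in (-R)..R, g x‖ ≤ C) :
    banachMean f = banachMean g := by
  rw [← sub_eq_zero, ← map_sub]
  refine banachMean_eq_of_tendsto (tendsto_symmAverage_zero_of_norm_integral_le (C := C)
    fun R hR => ?_)
  specialize h R hR
  rw [← intervalIntegral.integral_sub (f.continuous.intervalIntegrable _ _)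
    (g.continuous.intervalIntegrable _ _)] at h
  exact h

lemma banachMean_translateR (g : ℝ →ᵇ ℂ) (s : ℝ) : banachMean (translateR g s) = banachMean g := by
  refine banachMean_eq_of_norm_integral_sub_le (C := ‖g‖ * |s| + ‖g‖ * |s|) fun R _ => ?_
  have integrable (a b : ℝ) : IntervalIntegrable g MeasureTheory.volume a b :=
    g.continuous.intervalIntegrable a b
  have end_le (a : ℝ) : ‖∫ x in a..(a + s), g x‖ ≤ ‖g‖ * |s| := by
    simpa using intervalIntegral.norm_integral_le_of_norm_le_const (a := a) (b := a + s)
      fun x _ => g.norm_coe_le_norm x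
  calc ‖(∫ x in (-R)..R, translateR g s x) - ∫ x in (-R)..R, g x‖
      = ‖(∫ x in (-R + s)..(R + s), g x) - ∫ x in (-R)..R, g x‖ := by
        rw [← intervalIntegral.integral_comp_add_right]
        rfl
    _ = ‖(∫ x in R..(R + s), g x) - ∫ x in (-R)..(-R + s), g x‖ := by
        rw [intervalIntegral.integral_interval_sub_interval_comm' (integrable _ _)
          (integrable _ _) (integrable _ _)]
    _ ≤ ‖g‖ * |s| + ‖g‖ * |s| := (norm_sub_le _ _).trans (add_le_add (end_le R) (end_le (-R)))

lemma norm_banachMean_le_re {f g : ℝ →ᵇ ℂ} (h : ∀ t, ‖f t‖ ≤ (g t).re) :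
    ‖banachMean f‖ ≤ (banachMean g).re := by
  refine le_of_tendsto_of_tendsto (tendsto_symmAverage_banachMean f).norm
    ((continuous_re.tendsto _).comp (tendsto_symmAverage_banachMean g))
    (Ultrafilter.of_le _ ((eventually_ge_atTop (0 : ℝ)).mono fun R hR => ?_))
  have re_integral : (∫ x in (-R)..R, g x).re = ∫ x in (-R)..R, (g x).re := by
    simpa using (reCLM.intervalIntegral_comp_comm
      (g.continuous.intervalIntegrable (μ := MeasureTheory.volume) (-R) R)).symm
  simp only [Function.comp, symmAverage_apply]
  rw [norm_smul, Real.norm_of_nonneg (by positivity), smul_re, smul_eq_mul, re_integral]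
  gcongr
  exact intervalIntegral.norm_integral_le_of_norm_le (by linarith)
    (Eventually.of_forall fun t _ => h t)
    ((continuous_re.comp g.continuous).intervalIntegrable _ _)

lemma tendsto_symmAverage_one : Tendsto (fun R => symmAverage R 1) atTop (𝓝 1) := by
  refine tendsto_const_nhds.congr' ?_
  filter_upwards [eventually_gt_atTop 0] with R hR
  have hR' : (2 * R : ℝ) ≠ 0 := by positivity
  simp only [symmAverage_apply, BoundedContinuousFunction.coe_one, Pi.one_apply,
    intervalIntegral.integral_const]
  rw [smul_smul, sub_neg_eq_add, ← two_mul, inv_mul_cancel₀ hR', one_smul]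

lemma banachMean_one : banachMean 1 = 1 := banachMean_eq_of_tendsto tendsto_symmAverage_one

/-! ### Characters and trigonometric polynomials -/

/-- The character `t ↦ exp (i l t)` of `ℝ`, as a bounded continuous function. -/
def charR (l : ℝ) : ℝ →ᵇ ℂ :=
  .ofNormedAddCommGroup (fun t : ℝ => (Circle.exp (l * t) : ℂ)) (by fun_prop) 1
    fun _ => (Circle.norm_coe _).le

@[simp]
lemma charR_apply (l t : ℝ) : charR l t = Circle.exp (l * t) := rfl

lemma charR_mul (l m : ℝ) : charR l * charR m = charR (l + m) := by
  ext t
  simp [add_mul, Circle.exp_add]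

lemma charR_zero : charR 0 = 1 := by
  ext t
  simp

lemma tendsto_symmAverage_charR {l : ℝ} (hl : l ≠ 0) :
    Tendsto (fun R => symmAverage R (charR l)) atTop (𝓝 0) := by
  refine tendsto_symmAverage_zero_of_norm_integral_le (C := 2 / |l|) fun R _ => ?_
  have hlI : (l : ℂ) * I ≠ 0 := mul_ne_zero (ofReal_ne_zero.2 hl) I_ne_zero
  have eq_exp (t : ℝ) : charR l t = Complex.exp (l * I * t) := by
    rw [charR_apply, Circle.coe_exp]
    push_cast
    ring_nf
  have norm_exp (t : ℝ) : ‖Complex.exp (l * I * t)‖ = 1 := by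
    rw [← eq_exp, charR_apply, Circle.norm_coe]
  simp_rw [eq_exp, integral_exp_mul_complex hlI]
  rw [norm_div, norm_mul, norm_real, norm_I, mul_one, Real.norm_eq_abs]
  gcongr
  grw [norm_sub_le, norm_exp, norm_exp]
  norm_num

lemma tendsto_symmAverage_of_mem_closure_span_charR {g : ℝ →ᵇ ℂ}
    (hg : g ∈ (Submodule.span ℂ (range charR)).topologicalClosure) :
    Tendsto (fun R => symmAverage R g) atTop (𝓝 (banachMean g)) := by
  refine tendsto_clm_apply_of_mem_closure_span norm_symmAverage_le_one ?_ hg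
  rintro _ ⟨l, rfl⟩
  suffices h : ∃ a, Tendsto (fun R => symmAverage R (charR l)) atTop (𝓝 a) by
    obtain ⟨a, ha⟩ := h
    rwa [banachMean_eq_of_tendsto ha]
  rcases eq_or_ne l 0 with rfl | hl
  · exact ⟨1, by simpa only [charR_zero] using tendsto_symmAverage_one⟩
  · exact ⟨0, tendsto_symmAverage_charR hl⟩

/-- The algebra of trigonometric polynomials on `ℝ`, that is, the linear span of the characters. The
convolution kernels are chosen from it. -/
def trigPoly : Subalgebra ℂ (ℝ →ᵇ ℂ) :=
  (Submodule.span ℂ (range charR)).toSubalgebra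
    (Submodule.subset_span ⟨0, charR_zero⟩) fun f g hf hg => by
      refine Submodule.mul_le.1 ?_ f hf g hg
      rw [Submodule.span_mul_span, Submodule.span_le]
      rintro _ ⟨_, ⟨l, rfl⟩, _, ⟨m, rfl⟩, rfl⟩
      exact Submodule.subset_span ⟨l + m, (charR_mul l m).symm⟩

lemma charR_mem_trigPoly (l : ℝ) : charR l ∈ trigPoly :=
  Submodule.subset_span (mem_range_self l)

lemma mem_trigPoly_iff {k : ℝ →ᵇ ℂ} :
    k ∈ trigPoly ↔ ∃ c : ℝ →₀ ℂ, (c.sum fun l a => a • charR l) = k :=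
  Finsupp.mem_span_range_iff_exists_finsupp

/-! ### Trigonometric kernels concentrated near `0` -/

lemma exists_trigPoly_eq_one_sub_norm_sq (l : ℝ) : ∃ Q ∈ trigPoly, ∀ t : ℝ,
    Q t = ((1 - ‖(Circle.exp (l * t) : ℂ) - 1‖ ^ 2 / 4 : ℝ) : ℂ) := by
  refine ⟨(4⁻¹ : ℂ) • (charR l + charR (-l) + 2), trigPoly.smul_mem
    (add_mem (add_mem (charR_mem_trigPoly l) (charR_mem_trigPoly (-l))) (ofNat_mem _ 2)) _,
    fun t => ?_⟩
  set z := Circle.exp (l * t) with hz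
  have norm_sq : ((‖(z : ℂ) - 1‖ ^ 2 : ℝ) : ℂ) = (z - 1) * (z⁻¹ - 1) := by
    rw [ofReal_pow, ← mul_conj', map_sub, map_one, ← Circle.coe_inv_eq_conj, Circle.coe_inv]
  have mul_inv : (z : ℂ) * (z : ℂ)⁻¹ = 1 := mul_inv_cancel₀ z.coe_ne_zero
  have apply_eq : ((4⁻¹ : ℂ) • (charR l + charR (-l) + 2)) t = 4⁻¹ * (z + (z : ℂ)⁻¹ + 2) := by
    rw [hz, ← Circle.coe_inv, ← Circle.exp_neg, ← neg_mul]
    rfl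
  rw [apply_eq, ofReal_sub, ofReal_div, norm_sq]
  push_cast
  linear_combination (1 / 4 : ℂ) * mul_inv

lemma bohrNhds_eq_iInf : bohrNhds = ⨅ l, comap (fun t => Circle.exp (l * t)) (𝓝 1) := by
  simp only [bohrNhds, nhds_pi, Filter.pi, comap_iInf, comap_comap]
  rfl

-- Non-negativity of a complex-valued function `Q` is written as `(‖Q t‖ : ℂ) = Q t`.
lemma exists_trigPoly_norm_le_of_mem_comap {l : ℝ} {U : Set ℝ}
    (hU : U ∈ comap (fun t => Circle.exp (l * t)) (𝓝 1)) :
    ∃ Q ∈ trigPoly, (∀ t, (‖Q t‖ : ℂ) = Q t) ∧ (∀ t, ‖Q t‖ ≤ 1) ∧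
      Tendsto (fun t => ‖Q t‖) bohrNhds (𝓝 1) ∧ ∃ ρ < 1, ∀ t ∉ U, ‖Q t‖ ≤ ρ := by
  obtain ⟨W, hW, hWU⟩ := mem_comap.1 hU
  obtain ⟨δ, hδ, hδW⟩ := Metric.mem_nhds_iff.1 hW
  obtain ⟨Q, hQ, hQ_apply⟩ := exists_trigPoly_eq_one_sub_norm_sq l
  have norm_Q (t : ℝ) : ‖Q t‖ = 1 - ‖(Circle.exp (l * t) : ℂ) - 1‖ ^ 2 / 4 := by
    have : ‖(Circle.exp (l * t) : ℂ) - 1‖ ≤ 2 := by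
      grw [norm_sub_le, Circle.norm_coe, norm_one]
      norm_num
    rw [hQ_apply, norm_real, Real.norm_of_nonneg]
    nlinarith [norm_nonneg ((Circle.exp (l * t) : ℂ) - 1)]
  refine ⟨Q, hQ, fun t => by rw [norm_Q, hQ_apply], fun t => ?_, ?_, 1 - δ ^ 2 / 4, ?_,
    fun t ht => ?_⟩
  · rw [norm_Q]
    linarith [sq_nonneg ‖(Circle.exp (l * t) : ℂ) - 1‖]
  · have cont : Continuous fun z : Circle => 1 - ‖(z : ℂ) - 1‖ ^ 2 / 4 := by fun_prop
    simp_rw [norm_Q]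
    have := (cont.tendsto 1).comp (tendsto_circleExp_mul_bohrNhds l)
    rwa [Circle.coe_one, sub_self, norm_zero, zero_pow two_ne_zero, zero_div, sub_zero] at this
  · linarith [pow_pos hδ 2]
  · have : δ ≤ ‖(Circle.exp (l * t) : ℂ) - 1‖ := not_lt.1 fun h =>
      ht (hWU (hδW (by rwa [← dist_eq_norm] at h)))
    rw [norm_Q]
    gcongr

lemma exists_trigPoly_norm_le_of_mem_bohrNhds {U : Set ℝ} (hU : U ∈ bohrNhds) :
    ∃ Q ∈ trigPoly, (∀ t, (‖Q t‖ : ℂ) = Q t) ∧ (∀ t, ‖Q t‖ ≤ 1) ∧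
      Tendsto (fun t => ‖Q t‖) bohrNhds (𝓝 1) ∧ ∃ ρ < 1, ∀ t ∉ U, ‖Q t‖ ≤ ρ := by
  rw [bohrNhds_eq_iInf] at hU
  refine Filter.iInf_sets_induct hU
    ⟨1, one_mem _, by simp, by simp, by simpa using tendsto_const_nhds, 0, one_pos, by simp⟩ ?_
  rintro l U₁ U₂ hU₁ ⟨Q₂, hQ₂, nonneg₂, le_one₂, tendsto₂, ρ₂, hρ₂, le₂⟩
  obtain ⟨Q₁, hQ₁, nonneg₁, le_one₁, tendsto₁, ρ₁, hρ₁, le₁⟩ :=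
    exists_trigPoly_norm_le_of_mem_comap hU₁
  refine ⟨Q₁ * Q₂, mul_mem hQ₁ hQ₂, fun t => ?_, fun t => ?_, ?_, max ρ₁ ρ₂, max_lt hρ₁ hρ₂,
    fun t ht => ?_⟩
  · simp [nonneg₁, nonneg₂]
  · simpa using mul_le_one₀ (le_one₁ t) (norm_nonneg _) (le_one₂ t)
  · simpa using tendsto₁.mul tendsto₂
  · rw [BoundedContinuousFunction.mul_apply, norm_mul]
    by_cases ht₁ : t ∈ U₁
    · have := le₂ t fun ht₂ => ht ⟨ht₁, ht₂⟩
      grw [mul_le_of_le_one_left (norm_nonneg _) (le_one₁ t), this, ← le_max_right]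
    · grw [mul_le_of_le_one_right (norm_nonneg _) (le_one₂ t), le₁ t ht₁, ← le_max_left]

lemma re_eq_norm_of_norm_eq {a : ℂ} (ha : (‖a‖ : ℂ) = a) : a.re = ‖a‖ := by
  rw [← ofReal_re ‖a‖, ha]

lemma coe_norm_banachMean {P : ℝ →ᵇ ℂ} (hP : ∀ t, (‖P t‖ : ℂ) = P t) :
    (‖banachMean P‖ : ℂ) = banachMean P := by
  have norm_le : ‖banachMean P‖ ≤ (banachMean P).re :=
    norm_banachMean_le_re fun t => (re_eq_norm_of_norm_eq (hP t)).ge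
  open ComplexOrder in
  exact RCLike.norm_of_nonneg' (re_eq_norm.1 (norm_le.antisymm' (re_le_norm _)))

lemma le_card_mul_norm_banachMean {P : ℝ →ᵇ ℂ} (hP : ∀ t, (‖P t‖ : ℂ) = P t) {S : Finset ℝ}
    {a : ℝ} (ha : 0 ≤ a) (hS : ∀ t, ∃ s ∈ S, a ≤ ‖P (t - s)‖) :
    a ≤ S.card * ‖banachMean P‖ := by
  have re_P (t : ℝ) : (P t).re = ‖P t‖ := re_eq_norm_of_norm_eq (hP t)
  have dominated : ∀ t, ‖((a : ℂ) • (1 : ℝ →ᵇ ℂ)) t‖ ≤ ((∑ s ∈ S, translateR P (-s)) t).re := by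
    intro t
    obtain ⟨s, hs, hts⟩ := hS t
    calc ‖((a : ℂ) • (1 : ℝ →ᵇ ℂ)) t‖ = a := by simp [abs_of_nonneg ha]
      _ ≤ ‖P (t - s)‖ := hts
      _ ≤ ∑ s ∈ S, ‖P (t - s)‖ :=
        Finset.single_le_sum (f := fun s => ‖P (t - s)‖) (fun _ _ => norm_nonneg _) hs
      _ = ((∑ s ∈ S, translateR P (-s)) t).re := by
        rw [BoundedContinuousFunction.sum_apply, re_sum]
        simp only [← re_P, sub_eq_add_neg]
        rfl
  have := norm_banachMean_le_re dominated
  simp only [map_smul, map_sum, banachMean_translateR, banachMean_one] at this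
  rw [← coe_norm_banachMean hP] at this
  simpa [abs_of_nonneg ha] using this

lemma exists_trigPoly_kernel_of_mem_bohrNhds {U : Set ℝ} (hU : U ∈ bohrNhds) {η : ℝ}
    (hη : 0 < η) : ∃ k ∈ trigPoly, (∀ t, (‖k t‖ : ℂ) = k t) ∧ banachMean k = 1 ∧
      ∀ t ∉ U, ‖k t‖ ≤ η := by
  obtain ⟨Q, hQ, nonneg, -, tendsto_one, ρ, hρ, le_ρ⟩ := exists_trigPoly_norm_le_of_mem_bohrNhds hU
  obtain ⟨σ, hρσ, hσ⟩ := exists_between (max_lt hρ one_pos)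
  obtain ⟨hρσ, hσ₀⟩ := max_lt_iff.1 hρσ
  obtain ⟨S, hS⟩ := isSyndetic_of_mem_bohrNhds (tendsto_one.eventually_const_lt hσ)
  obtain ⟨n, hn⟩ : ∃ n : ℕ, S.card * (max ρ 0 / σ) ^ n < η := by
    have tendsto_pow : Tendsto (fun n : ℕ => S.card * (max ρ 0 / σ) ^ n) atTop (𝓝 0) := by
      simpa using (tendsto_pow_atTop_nhds_zero_of_lt_one (by positivity)
        ((div_lt_one hσ₀).2 (max_lt hρσ hσ₀))).const_mul (S.card : ℝ)
    exact (tendsto_pow.eventually_lt_const hη).exists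
  have nonneg_pow (t : ℝ) : (‖(Q ^ n) t‖ : ℂ) = (Q ^ n) t := by
    simp [nonneg]
  set r := ‖banachMean (Q ^ n)‖ with hr
  have le_r : σ ^ n ≤ S.card * r := by
    refine le_card_mul_norm_banachMean nonneg_pow (by positivity) fun t => ?_
    obtain ⟨s, hs, hts⟩ := hS t
    refine ⟨s, hs, ?_⟩
    rw [BoundedContinuousFunction.pow_apply, norm_pow]
    exact pow_le_pow_left₀ hσ₀.le (le_of_lt hts) n
  have r_pos : 0 < r := pos_of_mul_pos_right ((pow_pos hσ₀ n).trans_le le_r) (Nat.cast_nonneg _)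
  refine ⟨(r⁻¹ : ℂ) • Q ^ n, trigPoly.smul_mem (pow_mem hQ n) _, fun t => ?_, ?_, fun t ht => ?_⟩
  · rw [BoundedContinuousFunction.smul_apply, norm_smul, ofReal_mul, nonneg_pow]
    simp [r_pos.le]
  · rw [map_smul, ← coe_norm_banachMean nonneg_pow, ← hr, smul_eq_mul,
      inv_mul_cancel₀ (ofReal_ne_zero.2 r_pos.ne')]
  · calc ‖((r⁻¹ : ℂ) • Q ^ n) t‖ = r⁻¹ * ‖Q t‖ ^ n := by simp [r_pos.le]
      _ ≤ r⁻¹ * max ρ 0 ^ n := by grw [(le_ρ t ht).trans (le_max_left ρ 0)]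
      _ ≤ S.card * (max ρ 0 / σ) ^ n := by
        rw [div_pow, inv_mul_le_iff₀ r_pos, mul_div_assoc', mul_div_assoc',
          le_div_iff₀ (by positivity)]
        grw [le_r]
        exact le_of_eq (by ring)
      _ ≤ η := hn.le

theorem exists_trigPoly_kernel {φ : ℝ → ℝ} {B : ℝ} (hφ : ∀ t, 0 ≤ φ t) (hφB : ∀ t, φ t ≤ B)
    (hφ_tendsto : Tendsto φ bohrNhds (𝓝 0)) {ε : ℝ} (hε : 0 < ε) :
    ∃ k ∈ trigPoly, (∀ t, (‖k t‖ : ℂ) = k t) ∧ banachMean k = 1 ∧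
      ∀ t, ‖k t‖ * φ t ≤ ε * (1 + ‖k t‖) := by
  have hB : 0 ≤ B := (hφ 0).trans (hφB 0)
  obtain ⟨k, hk, nonneg, mean_one, hkU⟩ := exists_trigPoly_kernel_of_mem_bohrNhds
    (hφ_tendsto.eventually_lt_const hε) (η := ε / (B + 1)) (by positivity)
  refine ⟨k, hk, nonneg, mean_one, fun t => ?_⟩
  by_cases ht : φ t < ε
  · grw [ht]
    linarith
  · calc ‖k t‖ * φ t ≤ ε / (B + 1) * (B + 1) := by
          gcongr
          · exact hφ t
          · exact hkU t ht
          · linarith [hφB t]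
      _ = ε := div_mul_cancel₀ _ (by positivity)
      _ ≤ ε * (1 + ‖k t‖) := le_mul_of_one_le_right hε.le (by linarith [norm_nonneg (k t)])

/-! ### Almost periodic functions on the strip -/

section Translates

variable {B : Type*} [NormedAddCommGroup B]

lemma coe_stripShift (x : ℝ) (z : stripSet) : (stripShift x z : ℂ) = z + x := rfl

lemma stripShift_zero (z : stripSet) : stripShift 0 z = z :=
  Subtype.ext (by simp [coe_stripShift])

lemma stripShift_stripShift (x y : ℝ) (z : stripSet) :
    stripShift x (stripShift y z) = stripShift (x + y) z :=
  Subtype.ext (by simp only [coe_stripShift, ofReal_add]; ring)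

lemma stripShift_realPt_zero (x : ℝ) : stripShift x (realPt 0) = realPt x :=
  Subtype.ext (by simp [coe_stripShift, realPt])

lemma translateS_apply (f : stripSet →ᵇ B) (x : ℝ) (z : stripSet) :
    translateS f x z = f (stripShift x z) := rfl

lemma translateS_zero (f : stripSet →ᵇ B) : translateS f 0 = f := by
  ext z
  rw [translateS_apply, stripShift_zero]

lemma translateS_add (f : stripSet →ᵇ B) (x y : ℝ) :
    translateS f (x + y) = translateS (translateS f x) y := by
  ext z
  simp only [translateS_apply, stripShift_stripShift]

lemma norm_translateS_le (f : stripSet →ᵇ B) (x : ℝ) : ‖translateS f x‖ ≤ ‖f‖ :=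
  f.norm_compContinuous_le _

lemma dist_translateS (f g : stripSet →ᵇ B) (x : ℝ) :
    dist (translateS f x) (translateS g x) = dist f g := by
  have dist_le (f g : stripSet →ᵇ B) (x : ℝ) :
      dist (translateS f x) (translateS g x) ≤ dist f g := by
    simpa only [dist_eq_norm] using! norm_translateS_le (f - g) x
  refine (dist_le f g x).antisymm ?_
  simpa [← translateS_add, translateS_zero] using dist_le (translateS f x) (translateS g x) (-x)

lemma continuousAt_translateS_zero {f : stripSet →ᵇ B}
    (hf : IsCompact (closure (range (translateS f)))) : ContinuousAt (translateS f) 0 := by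
  rw [ContinuousAt, translateS_zero]
  refine hf.le_nhds_of_unique_clusterPt
    (Filter.mem_map.2 (univ_mem' fun t => subset_closure ⟨t, rfl⟩)) fun g _ hg => ?_
  ext z
  have eval_clusterPt : ClusterPt (g z) (map (fun t => translateS f t z) (𝓝 0)) :=
    hg.map (continuous_eval_const z).continuousAt tendsto_map
  have orbit_cont : Continuous fun t : ℝ => translateS f t z :=
    f.continuous.comp (Continuous.subtype_mk (by fun_prop) _)
  have eval_tendsto := orbit_cont.tendsto 0
  rw [translateS_zero] at eval_tendsto
  exact eq_of_nhds_neBot (eval_clusterPt.mono eval_tendsto).neBot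

lemma tendsto_translateS_bohrNhds {f : stripSet →ᵇ B}
    (hf : IsCompact (closure (range (translateS f)))) :
    Tendsto (translateS f) bohrNhds (𝓝 f) := by
  have := tendsto_bohrNhds_of_totallyBounded
    (fun s t u => by simp only [translateS_add, dist_translateS])
    (hf.totallyBounded.subset subset_closure) (continuousAt_translateS_zero hf)
  rwa [translateS_zero] at this

/-- The space `APH_Γ(T)`, as the closed linear span of the set of its elements. -/
abbrev aphSpace (Γ : Set ℝ) : Submodule ℂ (stripSet →ᵇ ℂ) :=
  (Submodule.span ℂ (APHset Γ)).topologicalClosure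

lemma mem_aphSpace_of_mem_APHset {Γ : Set ℝ} {f : stripSet →ᵇ ℂ} (hf : f ∈ APHset Γ) :
    f ∈ aphSpace Γ :=
  Submodule.le_topologicalClosure _ (Submodule.subset_span hf)

lemma tendsto_translateS_bohrNhds_of_mem_aphSpace {Γ : Set ℝ} {f : stripSet →ᵇ ℂ}
    (hf : f ∈ aphSpace Γ) : Tendsto (translateS f) bohrNhds (𝓝 f) :=
  tendsto_clm_apply_of_mem_closure_span (T₀ := .id ℂ _) (C := 1)
    (T := fun t => BoundedContinuousFunction.compContinuousCLM ℂ ℂ (stripShift t))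
    (fun t => ContinuousLinearMap.opNorm_le_bound _ zero_le_one fun f => by
      simpa using! norm_translateS_le f t)
    (fun _ hf => tendsto_translateS_bohrNhds hf.1.2) hf

end Translates

/-! ### Means along horizontal lines -/

lemma stripO_subset_stripSet : stripO ⊆ stripSet := fun _ hz => Ioo_subset_Icc_self hz

lemma stripExt_coe (f : stripSet →ᵇ ℂ) (z : stripSet) : stripExt f z = f z := dif_pos z.2

lemma stripExt_of_mem (f : stripSet →ᵇ ℂ) {z : ℂ} (hz : z ∈ stripSet) :
    stripExt f z = f ⟨z, hz⟩ := dif_pos hz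

lemma norm_stripExt_le (f : stripSet →ᵇ ℂ) (z : ℂ) : ‖stripExt f z‖ ≤ ‖f‖ := by
  rw [stripExt]
  split_ifs
  · exact f.norm_coe_le_norm _
  · simp

lemma continuousOn_stripExt (f : stripSet →ᵇ ℂ) : ContinuousOn (stripExt f) stripSet := by
  rw [continuousOn_iff_continuous_domRestrict]
  exact f.continuous.congr fun z => (stripExt_coe f z).symm

lemma integral_line_sub_integral_real {f : stripSet →ᵇ ℂ}
    (hf : DifferentiableOn ℂ (stripExt f) stripO) {y : ℝ} (hy : y ∈ Icc 0 Real.pi) (R : ℝ) :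
    (∫ x in (-R)..R, stripExt f (x + y * I)) - ∫ x in (-R)..R, stripExt f x =
      (I • ∫ v in (0 : ℝ)..y, stripExt f (R + v * I)) -
        I • ∫ v in (0 : ℝ)..y, stripExt f ((-R : ℝ) + v * I) := by
  have cauchy := integral_boundary_rect_eq_zero_of_continuousOn_of_differentiableOn
    (stripExt f) ((-R : ℝ) : ℂ) ((R : ℂ) + y * I)
    ((continuousOn_stripExt f).mono fun u hu => by
      have hu_im : u.im ∈ Icc 0 y := by simpa [uIcc_of_le hy.1] using hu.2
      exact ⟨hu_im.1, hu_im.2.trans hy.2⟩)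
    (hf.mono fun u hu => by
      have hu_im : u.im ∈ Ioo 0 y := by simpa [hy.1] using hu.2
      exact ⟨hu_im.1, hu_im.2.trans_le hy.2⟩)
  simp only [ofReal_im, add_im, mul_im, ofReal_re, I_im, I_re, mul_one, mul_zero, add_zero,
    zero_add, add_re, mul_re, sub_zero, ofReal_zero, zero_mul] at cauchy
  linear_combination -cauchy

lemma norm_integral_line_sub_integral_real_le {f : stripSet →ᵇ ℂ}
    (hf : DifferentiableOn ℂ (stripExt f) stripO) {y : ℝ} (hy : y ∈ Icc 0 Real.pi) (R : ℝ) :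
    ‖(∫ x in (-R)..R, stripExt f (x + y * I)) - ∫ x in (-R)..R, stripExt f x‖ ≤
      ‖f‖ * y + ‖f‖ * y := by
  have side_le (x : ℝ) : ‖I • ∫ v in (0 : ℝ)..y, stripExt f (x + v * I)‖ ≤ ‖f‖ * y := by
    simpa [norm_smul, abs_of_nonneg hy.1] using
      intervalIntegral.norm_integral_le_of_norm_le_const (a := 0) (b := y)
        fun v _ => norm_stripExt_le f (x + v * I)
  rw [integral_line_sub_integral_real hf hy]
  exact (norm_sub_le _ _).trans (add_le_add (side_le R) (side_le (-R)))

/-- Restriction of a function on the strip to the horizontal line through `z`, parametrized by the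
translation parameter. -/
def restrictLine (z : stripSet) : (stripSet →ᵇ ℂ) →L[ℂ] (ℝ →ᵇ ℂ) :=
  BoundedContinuousFunction.compContinuousCLM ℂ ℂ
    ⟨fun t => stripShift t z, Continuous.subtype_mk (by fun_prop) _⟩

lemma restrictLine_apply (z : stripSet) (f : stripSet →ᵇ ℂ) (t : ℝ) :
    restrictLine z f t = f (stripShift t z) := rfl

lemma restrictLine_stripShift (z : stripSet) (f : stripSet →ᵇ ℂ) (s : ℝ) :
    restrictLine (stripShift s z) f = translateR (restrictLine z f) s := by
  ext t
  rw [restrictLine_apply, stripShift_stripShift]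
  rfl

lemma banachMean_restrictLine {f : stripSet →ᵇ ℂ} (hf : DifferentiableOn ℂ (stripExt f) stripO)
    (z : stripSet) : banachMean (restrictLine z f) = banachMean (restrictLine (realPt 0) f) := by
  have hy : ((z : ℂ).im * I).im ∈ Icc 0 Real.pi := by
    rw [im_ofReal_mul, I_im, mul_one]
    exact z.2
  obtain ⟨w, hw⟩ : ∃ w : stripSet, (w : ℂ) = (z : ℂ).im * I := ⟨⟨_, hy⟩, rfl⟩
  have z_eq : z = stripShift (z : ℂ).re w :=
    Subtype.ext (by rw [coe_stripShift, hw, add_comm, re_add_im])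
  rw [z_eq, restrictLine_stripShift, banachMean_translateR]
  refine banachMean_eq_of_norm_integral_sub_le
    (C := ‖f‖ * (z : ℂ).im + ‖f‖ * (z : ℂ).im) fun R _ => ?_
  have eq_line (t : ℝ) : restrictLine w f t = stripExt f (t + (z : ℂ).im * I) := by
    rw [restrictLine_apply, ← stripExt_coe, coe_stripShift, hw, add_comm]
  have eq_real (t : ℝ) : restrictLine (realPt 0) f t = stripExt f t := by
    rw [restrictLine_apply, stripShift_realPt_zero, ← stripExt_coe]
    rfl
  simp_rw [eq_line, eq_real]
  exact norm_integral_line_sub_integral_real_le hf z.2 R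

/-! ### Bohr–Fourier coefficients -/

/-- The exponential `z ↦ exp (i l z)` on the strip, whose restriction to `ℝ` is `charR l`. -/
def charS (l : ℝ) : stripSet →ᵇ ℂ :=
  .ofNormedAddCommGroup (fun z : stripSet => Complex.exp (I * l * z)) (by fun_prop)
    (Real.exp (|l| * Real.pi)) fun z => by
      have hre : (I * (l : ℂ) * z).re = -(l * (z : ℂ).im) := by simp
      rw [Complex.norm_exp, Real.exp_le_exp, hre]
      nlinarith [neg_abs_le l, abs_nonneg l, z.2.1, z.2.2]

lemma charS_apply (l : ℝ) (z : stripSet) : charS l z = Complex.exp (I * l * z) := rfl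

lemma charS_realPt (l t : ℝ) : charS l (realPt t) = charR l t := by
  rw [charS_apply, charR_apply, Circle.coe_exp, realPt]
  push_cast
  ring_nf

lemma charS_stripShift (l t : ℝ) (z : stripSet) :
    charS l (stripShift t z) = charR l t * charS l z := by
  rw [← charS_realPt, charS_apply, charS_apply, charS_apply, ← Complex.exp_add, coe_stripShift,
    realPt, mul_add, add_comm]

lemma charS_neg_mul (l : ℝ) (z : stripSet) : charS (-l) z * charS l z = 1 := by
  rw [charS_apply, charS_apply, ← Complex.exp_add]
  simp

lemma differentiableOn_charS (l : ℝ) : DifferentiableOn ℂ (stripExt (charS l)) stripO := by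
  have : Differentiable ℂ fun z : ℂ => Complex.exp (I * l * z) := by fun_prop
  exact this.differentiableOn.congr fun z hz => stripExt_of_mem _ (stripO_subset_stripSet hz)

lemma restrictLine_charS_mul (l : ℝ) (f : stripSet →ᵇ ℂ) (z : stripSet) :
    restrictLine z (charS l * f) = charS l z • (charR l * restrictLine z f) := by
  ext t
  simp only [restrictLine_apply, BoundedContinuousFunction.mul_apply, charS_stripShift,
    BoundedContinuousFunction.smul_apply, smul_eq_mul]
  ring

/-- The Bohr–Fourier coefficient at `l`, computed with `banachMean` so that it is a continuous
linear functional on all bounded continuous functions on the strip. -/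
def bohrCoeff (l : ℝ) : (stripSet →ᵇ ℂ) →L[ℂ] ℂ :=
  banachMean ∘L ContinuousLinearMap.mul ℂ (ℝ →ᵇ ℂ) (charR (-l)) ∘L restrictLine (realPt 0)

lemma bohrCoeff_apply (l : ℝ) (f : stripSet →ᵇ ℂ) :
    bohrCoeff l f = banachMean (charR (-l) * restrictLine (realPt 0) f) := rfl

lemma charR_mul_restrictLine_charS (l m : ℝ) :
    charR (-l) * restrictLine (realPt 0) (charS m) = charR (m - l) := by
  have : restrictLine (realPt 0) (charS m) = charR m := by
    ext t
    rw [restrictLine_apply, stripShift_realPt_zero, charS_realPt]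
  rw [this, charR_mul, neg_add_eq_sub]

lemma bohrCoeffR_eq_of_tendsto {f : stripSet →ᵇ ℂ} {l : ℝ} {a : ℂ}
    (h : Tendsto (fun R => symmAverage R (charR (-l) * restrictLine (realPt 0) f)) atTop (𝓝 a)) :
    bohrCoeffR (fun x : ℝ => f (realPt x)) l = a := by
  refine Tendsto.limUnder_eq (h.congr fun R => ?_)
  have eq_integrand (x : ℝ) : (charR (-l) * restrictLine (realPt 0) f) x =
      Complex.exp (-(I * l * x)) • f (realPt x) := by
    rw [BoundedContinuousFunction.mul_apply, restrictLine_apply, stripShift_realPt_zero,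
      ← charS_realPt, charS_apply, smul_eq_mul, ofReal_neg, mul_neg, neg_mul]
    rfl
  simp_rw [symmAverage_apply, eq_integrand]

lemma charS_mem_APHset {Γ : Set ℝ} {l : ℝ} (hl : l ∈ Γ) : charS l ∈ APHset Γ := by
  refine ⟨⟨differentiableOn_charS l, ?_⟩, fun m hm => ?_⟩
  · refine ((isCompact_closedBall (0 : ℂ) 1).image
      (f := fun c : ℂ => c • charS l) (by fun_prop)).closure_of_subset ?_
    rintro _ ⟨t, rfl⟩
    refine ⟨charR l t, by simp only [mem_closedBall_zero_iff, charR_apply, Circle.norm_coe, le_rfl],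
      ?_⟩
    ext z
    exact (charS_stripShift l t z).symm
  · by_contra hmΓ
    refine hm (bohrCoeffR_eq_of_tendsto ?_)
    rw [charR_mul_restrictLine_charS]
    exact tendsto_symmAverage_charR (sub_ne_zero.2 fun h => hmΓ (h ▸ hl))

lemma banachMean_charR_mul_restrictLine {f : stripSet →ᵇ ℂ}
    (hf : DifferentiableOn ℂ (stripExt f) stripO) (l : ℝ) (z : stripSet) :
    banachMean (charR l * restrictLine z f) = bohrCoeff (-l) f * charS (-l) z := by
  have differentiableOn_mul : DifferentiableOn ℂ (stripExt (charS l * f)) stripO := by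
    refine ((differentiableOn_charS l).mul hf).congr fun z hz => ?_
    simp only [Pi.mul_apply, stripExt_of_mem _ (stripO_subset_stripSet hz),
      BoundedContinuousFunction.mul_apply]
  have mean_eq := banachMean_restrictLine differentiableOn_mul z
  have charS_zero : charS l (realPt 0) = 1 := by simp [charS_realPt]
  rw [restrictLine_charS_mul, restrictLine_charS_mul, map_smul, map_smul, charS_zero, one_smul,
    smul_eq_mul] at mean_eq
  rw [bohrCoeff_apply, neg_neg, ← mean_eq]
  linear_combination (-banachMean (charR l * restrictLine z f)) * charS_neg_mul l z

/-! ### Smoothing by trigonometric kernels -/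

section Smoothing

/-- The trigonometric polynomial with coefficients `c`; the coefficients are what determines the
convolution operator `smoothing c` below. -/
def kernel (c : ℝ →₀ ℂ) : ℝ →ᵇ ℂ := c.sum fun l a => a • charR l

/-- Convolution with the trigonometric polynomial `kernel c`, as an operator of finite rank on all
bounded continuous functions on the strip. The formula in terms of Bohr–Fourier coefficients agrees
with `z ↦ M(t ↦ kernel c t * f (z + t))` for holomorphic `f`, see `smoothing_apply`. -/
def smoothing (c : ℝ →₀ ℂ) : (stripSet →ᵇ ℂ) →L[ℂ] (stripSet →ᵇ ℂ) :=
  c.sum fun l a => a • (bohrCoeff (-l)).smulRight (charS (-l))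

lemma smoothing_eq_sum (c : ℝ →₀ ℂ) (f : stripSet →ᵇ ℂ) :
    smoothing c f = c.sum fun l a => a • bohrCoeff (-l) f • charS (-l) := by
  simp only [smoothing, Finsupp.sum, _root_.sum_apply,
    _root_.smul_apply, ContinuousLinearMap.smulRight_apply]

lemma smoothing_mem {c : ℝ →₀ ℂ} {f : stripSet →ᵇ ℂ} {Y : Submodule ℂ (stripSet →ᵇ ℂ)}
    (hY : ∀ l, bohrCoeff l f ≠ 0 → charS l ∈ Y) : smoothing c f ∈ Y := by
  rw [smoothing_eq_sum]
  refine sum_mem fun l _ => Y.smul_mem _ ?_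
  by_cases hl : bohrCoeff (-l) f = 0
  · rw [hl, zero_smul]
    exact Y.zero_mem
  · exact Y.smul_mem _ (hY _ hl)

lemma finiteDimensional_range_smoothing (c : ℝ →₀ ℂ) :
    FiniteDimensional ℂ
      (LinearMap.range (smoothing c : (stripSet →ᵇ ℂ) →ₗ[ℂ] (stripSet →ᵇ ℂ))) := by
  have := FiniteDimensional.span_of_finite ℂ
    (c.support.finite_toSet.image fun l => charS (-l))
  refine Submodule.finiteDimensional_of_le (S₂ := Submodule.span ℂ
    ((fun l => charS (-l)) '' c.support)) ?_
  rintro _ ⟨f, rfl⟩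
  rw [ContinuousLinearMap.coe_coe, smoothing_eq_sum]
  exact sum_mem fun l hl => Submodule.smul_mem _ _ (Submodule.smul_mem _ _
    (Submodule.subset_span (mem_image_of_mem _ hl)))

lemma smoothing_apply_of_differentiableOn (c : ℝ →₀ ℂ) {f : stripSet →ᵇ ℂ}
    (hf : DifferentiableOn ℂ (stripExt f) stripO) (z : stripSet) :
    smoothing c f z = banachMean (kernel c * restrictLine z f) := by
  simp only [smoothing_eq_sum, kernel, Finsupp.sum, BoundedContinuousFunction.sum_apply,
    BoundedContinuousFunction.smul_apply, Finset.sum_mul, map_sum, smul_mul_assoc, map_smul,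
    banachMean_charR_mul_restrictLine hf, smul_eq_mul]

variable {Γ : Set ℝ} {c : ℝ →₀ ℂ} {f : stripSet →ᵇ ℂ}

lemma smoothing_apply (c : ℝ →₀ ℂ) (hf : f ∈ aphSpace Γ) (z : stripSet) :
    smoothing c f z = banachMean (kernel c * restrictLine z f) :=
  ContinuousLinearMap.eqOn_closure_span
    (f := BoundedContinuousFunction.evalCLM ℂ z ∘L smoothing c)
    (g := banachMean ∘L ContinuousLinearMap.mul ℂ (ℝ →ᵇ ℂ) (kernel c) ∘L restrictLine z)
    (fun _ hg => smoothing_apply_of_differentiableOn c hg.1.1 z) hf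

lemma norm_smoothing_le (hf : f ∈ aphSpace Γ) (hc : ∀ t, (‖kernel c t‖ : ℂ) = kernel c t)
    (hc_one : banachMean (kernel c) = 1) : ‖smoothing c f‖ ≤ ‖f‖ := by
  refine (BoundedContinuousFunction.norm_le (norm_nonneg _)).2 fun z => ?_
  have := norm_banachMean_le_re (f := kernel c * restrictLine z f) (g := (‖f‖ : ℂ) • kernel c)
    fun t => by
      rw [BoundedContinuousFunction.mul_apply, norm_mul, BoundedContinuousFunction.smul_apply,
        smul_eq_mul, re_ofReal_mul, re_eq_norm_of_norm_eq (hc t), mul_comm]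
      gcongr
      exact f.norm_coe_le_norm _
  rw [map_smul, hc_one, smul_eq_mul, mul_one, ofReal_re] at this
  rwa [smoothing_apply c hf]

lemma norm_smoothing_sub_le (hf : f ∈ aphSpace Γ) (hc : ∀ t, (‖kernel c t‖ : ℂ) = kernel c t)
    (hc_one : banachMean (kernel c) = 1) {ε : ℝ} (hε : 0 ≤ ε)
    (h : ∀ t, ‖kernel c t‖ * ‖translateS f t - f‖ ≤ ε * (1 + ‖kernel c t‖)) :
    ‖smoothing c f - f‖ ≤ 2 * ε := by
  refine (BoundedContinuousFunction.norm_le (by positivity)).2 fun z => ?_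
  have eq_mean : (smoothing c f - f) z =
      banachMean (kernel c * (restrictLine z f - f z • 1)) := by
    rw [mul_sub, map_sub, mul_smul_comm, mul_one, map_smul, hc_one, smul_eq_mul, mul_one,
      ← smoothing_apply c hf]
    rfl
  have := norm_banachMean_le_re (f := kernel c * (restrictLine z f - f z • 1))
    (g := (ε : ℂ) • (1 + kernel c)) fun t => by
      calc ‖(kernel c * (restrictLine z f - f z • 1)) t‖
          = ‖kernel c t‖ * ‖(translateS f t - f) z‖ := by
            rw [BoundedContinuousFunction.mul_apply, norm_mul]
            simp only [BoundedContinuousFunction.sub_apply, BoundedContinuousFunction.smul_apply,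
              BoundedContinuousFunction.coe_one, Pi.one_apply, smul_eq_mul, mul_one]
            rfl
        _ ≤ ‖kernel c t‖ * ‖translateS f t - f‖ := by
            gcongr
            exact BoundedContinuousFunction.norm_coe_le_norm _ z
        _ ≤ ε * (1 + ‖kernel c t‖) := h t
        _ = (((ε : ℂ) • (1 + kernel c)) t).re := by
            rw [BoundedContinuousFunction.smul_apply, BoundedContinuousFunction.add_apply,
              BoundedContinuousFunction.coe_one, Pi.one_apply, smul_eq_mul, re_ofReal_mul, add_re,
              one_re, re_eq_norm_of_norm_eq (hc t)]
  rw [map_smul, map_add, banachMean_one, hc_one, smul_eq_mul] at this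
  norm_num at this
  rw [eq_mean]
  linarith

theorem exists_smoothing_norm_sub_le (s : Finset (stripSet →ᵇ ℂ)) (hs : ∀ f ∈ s, f ∈ aphSpace Γ)
    {ε : ℝ} (hε : 0 < ε) :
    ∃ c : ℝ →₀ ℂ, (∀ f ∈ aphSpace Γ, ‖smoothing c f‖ ≤ ‖f‖) ∧
      ∀ f ∈ s, ‖smoothing c f - f‖ ≤ ε := by
  have tendsto_zero : Tendsto (fun t => ∑ f ∈ s, ‖translateS f t - f‖) bohrNhds (𝓝 0) := by
    rw [← Finset.sum_const_zero (s := s)]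
    exact tendsto_finsetSum _ fun f hf => tendsto_iff_norm_sub_tendsto_zero.1
      (tendsto_translateS_bohrNhds_of_mem_aphSpace (hs f hf))
  have le_bound (t : ℝ) : ∑ f ∈ s, ‖translateS f t - f‖ ≤ ∑ f ∈ s, (‖f‖ + ‖f‖) := by
    gcongr with f
    grw [norm_sub_le, norm_translateS_le]
  obtain ⟨k, hk, hk_nonneg, hk_one, hk_le⟩ := exists_trigPoly_kernel
    (fun t => Finset.sum_nonneg fun f _ => norm_nonneg _) le_bound tendsto_zero (half_pos hε)
  obtain ⟨c, rfl⟩ : ∃ c, kernel c = k := mem_trigPoly_iff.1 hk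
  refine ⟨c, fun f hf => norm_smoothing_le hf hk_nonneg hk_one, fun f hf => ?_⟩
  rw [← mul_div_cancel₀ ε two_ne_zero]
  refine norm_smoothing_sub_le (hs f hf) hk_nonneg hk_one (half_pos hε).le fun t => ?_
  refine le_trans ?_ (hk_le t)
  gcongr
  exact Finset.single_le_sum (f := fun f => ‖translateS f t - f‖) (fun _ _ => norm_nonneg _) hf

end Smoothing

/-! ### The approximation property -/

section ApproximationProperty

variable {Γ : Set ℝ} {f : stripSet →ᵇ ℂ}

lemma mem_closure_span_charS (hf : f ∈ aphSpace Γ) :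
    f ∈ (Submodule.span ℂ (range charS)).topologicalClosure := by
  refine Metric.mem_closure_iff.2 fun ε hε => ?_
  obtain ⟨c, -, hc⟩ := exists_smoothing_norm_sub_le {f} (by simpa using hf) (half_pos hε)
  refine ⟨smoothing c f, smoothing_mem fun l _ => Submodule.subset_span (mem_range_self l), ?_⟩
  rw [dist_comm, dist_eq_norm]
  exact (hc f (Finset.mem_singleton_self f)).trans_lt (half_lt_self hε)

lemma bohrCoeffR_eq_bohrCoeff (hf : f ∈ aphSpace Γ) (l : ℝ) :
    bohrCoeffR (fun x : ℝ => f (realPt x)) l = bohrCoeff l f := by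
  refine bohrCoeffR_eq_of_tendsto (tendsto_symmAverage_of_mem_closure_span_charR ?_)
  let T := ContinuousLinearMap.mul ℂ (ℝ →ᵇ ℂ) (charR (-l)) ∘L restrictLine (realPt 0)
  have map_le : (Submodule.span ℂ (range charS)).map (T : (stripSet →ᵇ ℂ) →ₗ[ℂ] (ℝ →ᵇ ℂ)) ≤
      Submodule.span ℂ (range charR) := by
    refine (Submodule.map_span_le _ _ _).2 ?_
    rintro _ ⟨m, rfl⟩
    exact Submodule.subset_span ⟨m - l, (charR_mul_restrictLine_charS l m).symm⟩
  exact map_mem_closure (f := T) T.continuous (mem_closure_span_charS hf) fun g hg =>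
    map_le (Submodule.mem_map_of_mem hg)

lemma bohrCoeff_eq_zero (hf : f ∈ aphSpace Γ) {l : ℝ} (hl : l ∉ Γ) : bohrCoeff l f = 0 :=
  ContinuousLinearMap.eqOn_closure_span (g := 0) (fun g hg => by
    by_contra h
    rw [← bohrCoeffR_eq_bohrCoeff (mem_aphSpace_of_mem_APHset hg)] at h
    exact hl (hg.2 h)) hf

lemma smoothing_mem_aphSpace (c : ℝ →₀ ℂ) (hf : f ∈ aphSpace Γ) : smoothing c f ∈ aphSpace Γ :=
  smoothing_mem fun _ hl => mem_aphSpace_of_mem_APHset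
    (charS_mem_APHset (by_contra fun hlΓ => hl (bohrCoeff_eq_zero hf hlΓ)))

/-- The restriction of `smoothing c` to `APH_Γ(T)`. -/
def aphSmoothing (Γ : Set ℝ) (c : ℝ →₀ ℂ) : aphSpace Γ →L[ℂ] aphSpace Γ :=
  (smoothing c ∘L (aphSpace Γ).subtypeL).codRestrict _ fun f => smoothing_mem_aphSpace c f.2

lemma finiteDimensional_range_aphSmoothing (Γ : Set ℝ) (c : ℝ →₀ ℂ) :
    FiniteDimensional ℂ (LinearMap.range (aphSmoothing Γ c : aphSpace Γ →ₗ[ℂ] aphSpace Γ)) := by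
  have := finiteDimensional_range_smoothing c
  refine Module.Finite.of_injective (LinearMap.restrict (aphSpace Γ).subtype
    (q := LinearMap.range (smoothing c : (stripSet →ᵇ ℂ) →ₗ[ℂ] (stripSet →ᵇ ℂ))) ?_) ?_
  · rintro _ ⟨f, rfl⟩
    exact ⟨f, rfl⟩
  · intro f g h
    have coe_eq := Subtype.ext_iff.1 h
    exact Subtype.ext (Subtype.ext coe_eq)

end ApproximationProperty

end SAP

theorem stmt1_general (Γ : Set ℝ) :
    SAP.HasApproxProperty ↥((Submodule.span ℂ (SAP.APHset Γ)).topologicalClosure) := by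
  classical
  refine SAP.hasApproxProperty_of_forall_finset (C := 1) fun s ε hε => ?_
  obtain ⟨c, norm_le, norm_sub_le⟩ := SAP.exists_smoothing_norm_sub_le (Γ := Γ)
    (s.image Subtype.val) (fun f hf => by
      obtain ⟨g, -, rfl⟩ := Finset.mem_image.1 hf; exact g.2) hε
  exact ⟨SAP.aphSmoothing Γ c, SAP.finiteDimensional_range_aphSmoothing Γ c,
    ContinuousLinearMap.opNorm_le_bound _ zero_le_one fun f => by
      rw [one_mul]; exact norm_le f f.2,
    fun f hf => norm_sub_le f (Finset.mem_image_of_mem _ hf)⟩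

theorem stmt1 (Γ : Set ℝ) (hΓ : SAP.IsUnitalSemigroup Γ) :
    SAP.HasApproxProperty ↥((Submodule.span ℂ (SAP.APHset Γ)).topologicalClosure) :=
  stmt1_general Γ
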